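/- For an almost hyperHermitian manifold (M, I, J, K, g) the following conditions are equivalent: (1) M is an HKT-manifold; (2) J dω_J = K dω_K and N_J = 0; (3) ∂_I(ω_J + iω_K) = 0 and N_J = 0; (4) ∂̄_I(ω_J − iω_K) = 0 and N_J = 0. -/

import Mathlib

/-!  Synthetic (Koszul-style) model of an almost quaternion-Hermitian `4n`-manifold.

`C` plays the role of the commutative ℝ-algebra of smooth functions and `V` that of
the `C`-module of vector fields, equipped with a directional derivative `D`, a Lie
bracket, a Riemannian metric `g` together with its Levi-Civita connection `nab`
(characterised by being torsion-free and metric), a local adapted basis `I, J, K`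
of anticommuting almost complex structures with `K = I J`, each compatible with the
metric, and a (local) orthonormal frame.  -/

noncomputable section

open scoped BigOperators

structure AQH (n : ℕ) (C : Type*) (V : Type*) [CommRing C] [Algebra ℝ C]
    [AddCommGroup V] [Module C V] where
  /-- derivative of a function along a vector field -/
  D : V → C → C
  D_add : ∀ X f g, D X (f + g) = D X f + D X g
  D_mul : ∀ X f g, D X (f * g) = f * D X g + g * D X f
  D_const : ∀ X (r : ℝ), D X (algebraMap ℝ C r) = 0
  D_addX : ∀ X Y f, D (X + Y) f = D X f + D Y f
  D_smulX : ∀ (f : C) (X : V) (h : C), D (f • X) h = f * D X h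
  /-- the Lie bracket of vector fields -/
  bracket : V → V → V
  bracket_skew : ∀ X Y, bracket X Y = -bracket Y X
  bracket_add : ∀ X Y Z, bracket X (Y + Z) = bracket X Y + bracket X Z
  bracket_smul : ∀ X (f : C) Y, bracket X (f • Y) = f • bracket X Y + (D X f) • Y
  bracket_jacobi : ∀ X Y Z,
    bracket X (bracket Y Z) + bracket Y (bracket Z X) + bracket Z (bracket X Y) = 0
  D_bracket : ∀ X Y f, D (bracket X Y) f = D X (D Y f) - D Y (D X f)
  /-- the Riemannian metric -/
  g : V → V → C
  g_symm : ∀ X Y, g X Y = g Y X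
  g_add : ∀ X Y Z, g (X + Y) Z = g X Z + g Y Z
  g_smul : ∀ (f : C) X Y, g (f • X) Y = f * g X Y
  /-- the Levi-Civita connection -/
  nab : V → V → V
  nab_addX : ∀ X Y Z, nab (X + Y) Z = nab X Z + nab Y Z
  nab_smulX : ∀ (f : C) X Y, nab (f • X) Y = f • nab X Y
  nab_add : ∀ X Y Z, nab X (Y + Z) = nab X Y + nab X Z
  nab_leibniz : ∀ X (f : C) Y, nab X (f • Y) = f • nab X Y + (D X f) • Y
  torsion_free : ∀ X Y, nab X Y - nab Y X = bracket X Y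
  nab_metric : ∀ X Y Z, D X (g Y Z) = g (nab X Y) Z + g Y (nab X Z)
  /-- the (local) adapted basis of almost complex structures -/
  I : V → V
  J : V → V
  K : V → V
  I_lin : ∀ (f : C) X Y, I (f • X + Y) = f • I X + I Y
  J_lin : ∀ (f : C) X Y, J (f • X + Y) = f • J X + J Y
  K_lin : ∀ (f : C) X Y, K (f • X + Y) = f • K X + K Y
  I_sq : ∀ X, I (I X) = -X
  J_sq : ∀ X, J (J X) = -X
  K_def : ∀ X, K X = I (J X)
  anticomm : ∀ X, I (J X) = -J (I X)
  I_metric : ∀ X Y, g (I X) (I Y) = g X Y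
  J_metric : ∀ X Y, g (J X) (J Y) = g X Y
  /-- a (local) orthonormal frame -/
  frame : Fin (4 * n) → V
  frame_orthonormal : ∀ i j, g (frame i) (frame j) = if i = j then 1 else 0
  frame_span : ∀ X, X = ∑ i, g X (frame i) • frame i

namespace AQH

section ops

variable {C V : Type*} [CommRing C]

/-- the operator `A_(1)` on covariant 3-tensors -/
def op1 (A : V → V) (ψ : V → V → V → C) : V → V → V → C := fun X Y Z => -ψ (A X) Y Z

/-- the operator `A_(2)` on covariant 3-tensors -/
def op2 (A : V → V) (ψ : V → V → V → C) : V → V → V → C := fun X Y Z => -ψ X (A Y) Z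

/-- the operator `A_(3)` on covariant 3-tensors -/
def op3 (A : V → V) (ψ : V → V → V → C) : V → V → V → C := fun X Y Z => -ψ X Y (A Z)

/-- the operator `A_(12) = A_(1) A_(2)` on covariant 3-tensors -/
def op12 (A : V → V) (ψ : V → V → V → C) : V → V → V → C := fun X Y Z => ψ (A X) (A Y) Z

/-- the operator `A_(13) = A_(1) A_(3)` on covariant 3-tensors -/
def op13 (A : V → V) (ψ : V → V → V → C) : V → V → V → C := fun X Y Z => ψ (A X) Y (A Z)

/-- the operator `A_(23) = A_(2) A_(3)` on covariant 3-tensors -/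
def op23 (A : V → V) (ψ : V → V → V → C) : V → V → V → C := fun X Y Z => ψ X (A Y) (A Z)

/-- the operator `𝓛_A = A_(12) + A_(13) + A_(23)` on three-forms -/
def calL (A : V → V) (ψ : V → V → V → C) : V → V → V → C :=
  fun X Y Z => op12 A ψ X Y Z + op13 A ψ X Y Z + op23 A ψ X Y Z

/-- the action `(A ν)(X) = -ν (A X)` of `A` on a one-form -/
def act1 (A : V → V) (ν : V → C) : V → C := fun X => -ν (A X)

/-- the action `(A ψ)(X,Y,Z) = -ψ(AX,AY,AZ)` of `A` on a three-form -/
def act3 (A : V → V) (ψ : V → V → V → C) : V → V → V → C :=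
  fun X Y Z => -ψ (A X) (A Y) (A Z)

/-- wedge product of two one-forms -/
def wedge11 (α β : V → C) : V → V → C := fun X Y => α X * β Y - α Y * β X

/-- wedge product of a one-form and a two-form -/
def wedge12 (ν : V → C) (ω : V → V → C) : V → V → V → C :=
  fun X Y Z => ν X * ω Y Z - ν Y * ω X Z + ν Z * ω X Y

/-- wedge product of two two-forms -/
def wedge22 (α β : V → V → C) : V → V → V → V → C := fun X Y Z W =>
  α X Y * β Z W - α X Z * β Y W + α X W * β Y Z
    + α Z W * β X Y - α Y W * β X Z + α Y Z * β X W

/-- a (0,3)-tensor is an alternating three-form -/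
def IsAlt3 (T : V → V → V → C) : Prop :=
  (∀ X Y Z, T Y X Z = -T X Y Z) ∧ (∀ X Y Z, T X Z Y = -T X Y Z)

variable [AddCommGroup V] [Module C V]

/-- `C`-linearity (tensoriality) of a three-form in its first argument -/
def Lin3 (T : V → V → V → C) : Prop :=
  ∀ (f : C) X X' Y Z, T (f • X + X') Y Z = f * T X Y Z + T X' Y Z

/-- `C`-linearity (tensoriality) of a one-form -/
def Lin1 (ν : V → C) : Prop := ∀ (f : C) X X', ν (f • X + X') = f * ν X + ν X'

end ops

section derived

variable {n : ℕ} {C V : Type*} [CommRing C] [Algebra ℝ C] [AddCommGroup V] [Module C V]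
  [Module ℝ V] [IsScalarTower ℝ C V]

variable (M : AQH n C V)

/-- the Kähler form `ω_A(X,Y) = g(X, A Y)` -/
def omega (A : V → V) : V → V → C := fun X Y => M.g X (A Y)

/-- `(∇_X A) Y` -/
def nabA (A : V → V) : V → V → V := fun X Y => M.nab X (A Y) - A (M.nab X Y)

/-- covariant derivative of a 2-form: `(∇_X ψ)(Y,Z)` -/
def nab2 (ψ : V → V → C) : V → V → V → C :=
  fun X Y Z => M.D X (ψ Y Z) - ψ (M.nab X Y) Z - ψ Y (M.nab X Z)

/-- covariant derivative of a 4-form -/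
def nab4 (ψ : V → V → V → V → C) : V → V → V → V → V → C :=
  fun X Y Z W U => M.D X (ψ Y Z W U) - ψ (M.nab X Y) Z W U - ψ Y (M.nab X Z) W U
    - ψ Y Z (M.nab X W) U - ψ Y Z W (M.nab X U)

/-- exterior derivative of a one-form -/
def d1 (ν : V → C) : V → V → C :=
  fun X Y => M.D X (ν Y) - M.D Y (ν X) - ν (M.bracket X Y)

/-- exterior derivative of a two-form -/
def d2 (ψ : V → V → C) : V → V → V → C :=
  fun X Y Z => M.D X (ψ Y Z) - M.D Y (ψ X Z) + M.D Z (ψ X Y)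
    - ψ (M.bracket X Y) Z + ψ (M.bracket X Z) Y - ψ (M.bracket Y Z) X

/-- exterior derivative of a four-form -/
def d4 (ψ : V → V → V → V → C) : V → V → V → V → V → C := fun X Y Z W U =>
  M.D X (ψ Y Z W U) - M.D Y (ψ X Z W U) + M.D Z (ψ X Y W U) - M.D W (ψ X Y Z U)
      + M.D U (ψ X Y Z W)
    - ψ (M.bracket X Y) Z W U + ψ (M.bracket X Z) Y W U - ψ (M.bracket X W) Y Z U
      + ψ (M.bracket X U) Y Z W
    - ψ (M.bracket Y Z) X W U + ψ (M.bracket Y W) X Z U - ψ (M.bracket Y U) X Z W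
    - ψ (M.bracket Z W) X Y U + ψ (M.bracket Z U) X Y W
    - ψ (M.bracket W U) X Y Z

/-- the Nijenhuis tensor `N_A(X,Y)` -/
def nijV (A : V → V) : V → V → V := fun X Y =>
  M.bracket X Y + A (M.bracket (A X) Y) + A (M.bracket X (A Y)) - M.bracket (A X) (A Y)

/-- the Nijenhuis `(0,3)`-tensor `N_A(X,Y,Z) = g(X, N_A(Y,Z))` -/
def nij3 (A : V → V) : V → V → V → C := fun X Y Z => M.g X (M.nijV A Y Z)

/-- the induced inner product of two 2-forms,
`⟨ψ,φ⟩ = (1/2!) ψ(e_i,e_j) φ(e_i,e_j)` -/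
def inner2 (ψ φ : V → V → C) : C :=
  (1/2 : ℝ) • ∑ i, ∑ j, ψ (M.frame i) (M.frame j) * φ (M.frame i) (M.frame j)

/-- the contraction `(Λ_A β)(X) = ⟨X ⌟ β, ω_A⟩` of a three-form -/
def Lam (A : V → V) (β : V → V → V → C) : V → C :=
  fun X => (1/2 : ℝ) •
    ∑ i, ∑ j, β X (M.frame i) (M.frame j) * M.omega A (M.frame i) (M.frame j)

/-- `λ_I(X) = (1/2n) ⟨∇_X ω_J, ω_K⟩` -/
def lambdaI : V → C := fun X =>
  (1/(2*(n:ℝ))) • M.inner2 (fun Y Z => M.nab2 (M.omega M.J) X Y Z) (M.omega M.K)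

/-- `λ_J(X) = (1/2n) ⟨∇_X ω_K, ω_I⟩` -/
def lambdaJ : V → C := fun X =>
  (1/(2*(n:ℝ))) • M.inner2 (fun Y Z => M.nab2 (M.omega M.K) X Y Z) (M.omega M.I)

/-- `λ_K(X) = (1/2n) ⟨∇_X ω_I, ω_J⟩` -/
def lambdaK : V → C := fun X =>
  (1/(2*(n:ℝ))) • M.inner2 (fun Y Z => M.nab2 (M.omega M.I) X Y Z) (M.omega M.J)

/-- codifferential of a two-form -/
def codiff2 (ψ : V → V → C) : V → C := fun Z => -∑ i, M.nab2 ψ (M.frame i) (M.frame i) Z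

/-- codifferential of a four-form -/
def codiff4 (ψ : V → V → V → V → C) : V → V → V → C :=
  fun X Y Z => -∑ i, M.nab4 ψ (M.frame i) (M.frame i) X Y Z

/-- `β_I = J dω_J + K dω_K` -/
def betaI : V → V → V → C := fun X Y Z =>
  act3 M.J (M.d2 (M.omega M.J)) X Y Z + act3 M.K (M.d2 (M.omega M.K)) X Y Z

/-- `β_J = K dω_K + I dω_I` -/
def betaJ : V → V → V → C := fun X Y Z =>
  act3 M.K (M.d2 (M.omega M.K)) X Y Z + act3 M.I (M.d2 (M.omega M.I)) X Y Z

/-- `β_K = I dω_I + J dω_J` -/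
def betaK : V → V → V → C := fun X Y Z =>
  act3 M.I (M.d2 (M.omega M.I)) X Y Z + act3 M.J (M.d2 (M.omega M.J)) X Y Z

/-- the intrinsic torsion
`ξ_X Y = -(1/4) Σ_A A (∇_X A) Y + (1/2) Σ_A λ_A(X) A Y` -/
def xi : V → V → V := fun X Y =>
  (-(1/4 : ℝ)) • (M.I (M.nabA M.I X Y) + M.J (M.nabA M.J X Y) + M.K (M.nabA M.K X Y))
    + (1/2 : ℝ) • (M.lambdaI X • M.I Y + M.lambdaJ X • M.J Y + M.lambdaK X • M.K Y)

/-- the one-form `ν^I_4 = I Λ_I β_I` -/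
def nu4I : V → C := act1 M.I (M.Lam M.I M.betaI)

/-- the one-form `ν^J_4 = J Λ_J β_J` -/
def nu4J : V → C := act1 M.J (M.Lam M.J M.betaJ)

/-- the one-form `ν^K_4 = K Λ_K β_K` -/
def nu4K : V → C := act1 M.K (M.Lam M.K M.betaK)

/-- `ν^I_3`, determined by `J Λ_J β_I = (1/(2n-1)) (ν^I_4 + (2n+1)(n-1) ν^I_3)` -/
def nu3I : V → C := fun X =>
  (1/((2*(n:ℝ)+1) * ((n:ℝ)-1))) •
    ((2*(n:ℝ)-1) • act1 M.J (M.Lam M.J M.betaI) X - M.nu4I X)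

/-- `ν^J_3`, determined by `K Λ_K β_J = (1/(2n-1)) (ν^J_4 + (2n+1)(n-1) ν^J_3)` -/
def nu3J : V → C := fun X =>
  (1/((2*(n:ℝ)+1) * ((n:ℝ)-1))) •
    ((2*(n:ℝ)-1) • act1 M.K (M.Lam M.K M.betaJ) X - M.nu4J X)

/-- `ν^K_3`, determined by `I Λ_I β_K = (1/(2n-1)) (ν^K_4 + (2n+1)(n-1) ν^K_3)` -/
def nu3K : V → C := fun X =>
  (1/((2*(n:ℝ)+1) * ((n:ℝ)-1))) •
    ((2*(n:ℝ)-1) • act1 M.I (M.Lam M.I M.betaK) X - M.nu4K X)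

/-- `β^{(E)}_{3I} = -(1/2) Jν^I_3 ∧ ω_J - (1/2) Kν^I_3 ∧ ω_K + (1/(2n-1)) Iν^I_3 ∧ ω_I` -/
def betaE3I : V → V → V → C := fun X Y Z =>
  (-(1/2:ℝ)) • wedge12 (act1 M.J M.nu3I) (M.omega M.J) X Y Z
    + (-(1/2:ℝ)) • wedge12 (act1 M.K M.nu3I) (M.omega M.K) X Y Z
    + (1/(2*(n:ℝ)-1)) • wedge12 (act1 M.I M.nu3I) (M.omega M.I) X Y Z

def betaE3J : V → V → V → C := fun X Y Z =>
  (-(1/2:ℝ)) • wedge12 (act1 M.K M.nu3J) (M.omega M.K) X Y Z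
    + (-(1/2:ℝ)) • wedge12 (act1 M.I M.nu3J) (M.omega M.I) X Y Z
    + (1/(2*(n:ℝ)-1)) • wedge12 (act1 M.J M.nu3J) (M.omega M.J) X Y Z

def betaE3K : V → V → V → C := fun X Y Z =>
  (-(1/2:ℝ)) • wedge12 (act1 M.I M.nu3K) (M.omega M.I) X Y Z
    + (-(1/2:ℝ)) • wedge12 (act1 M.J M.nu3K) (M.omega M.J) X Y Z
    + (1/(2*(n:ℝ)-1)) • wedge12 (act1 M.K M.nu3K) (M.omega M.K) X Y Z

/-- `β_{4I} = -(1/(2n-1)) Iν^I_4 ∧ ω_I` -/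
def beta4I : V → V → V → C := fun X Y Z =>
  (-(1/(2*(n:ℝ)-1))) • wedge12 (act1 M.I M.nu4I) (M.omega M.I) X Y Z

def beta4J : V → V → V → C := fun X Y Z =>
  (-(1/(2*(n:ℝ)-1))) • wedge12 (act1 M.J M.nu4J) (M.omega M.J) X Y Z

def beta4K : V → V → V → C := fun X Y Z =>
  (-(1/(2*(n:ℝ)-1))) • wedge12 (act1 M.K M.nu4K) (M.omega M.K) X Y Z

/-- `β_I^{(3+K)} = β_I - β^{(E)}_{3I} - β_{4I}` -/
def beta3KI : V → V → V → C := fun X Y Z => M.betaI X Y Z - M.betaE3I X Y Z - M.beta4I X Y Z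

def beta3KJ : V → V → V → C := fun X Y Z => M.betaJ X Y Z - M.betaE3J X Y Z - M.beta4J X Y Z

def beta3KK : V → V → V → C := fun X Y Z => M.betaK X Y Z - M.betaE3K X Y Z - M.beta4K X Y Z

/-- `β_I^{(3)} = (1/6) (2 - 𝓛_J - 𝓛_K) β_I^{(3+K)}` -/
def beta3I : V → V → V → C := fun X Y Z =>
  (1/6:ℝ) • ((2:ℝ) • M.beta3KI X Y Z - calL M.J M.beta3KI X Y Z - calL M.K M.beta3KI X Y Z)

def beta3J : V → V → V → C := fun X Y Z =>
  (1/6:ℝ) • ((2:ℝ) • M.beta3KJ X Y Z - calL M.K M.beta3KJ X Y Z - calL M.I M.beta3KJ X Y Z)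

def beta3K : V → V → V → C := fun X Y Z =>
  (1/6:ℝ) • ((2:ℝ) • M.beta3KK X Y Z - calL M.I M.beta3KK X Y Z - calL M.J M.beta3KK X Y Z)

/-- `β_I^{(K)} = (1/6) (4 + 𝓛_J + 𝓛_K) β_I^{(3+K)}` -/
def betaKI : V → V → V → C := fun X Y Z =>
  (1/6:ℝ) • ((4:ℝ) • M.beta3KI X Y Z + calL M.J M.beta3KI X Y Z + calL M.K M.beta3KI X Y Z)

def betaKJ : V → V → V → C := fun X Y Z =>
  (1/6:ℝ) • ((4:ℝ) • M.beta3KJ X Y Z + calL M.K M.beta3KJ X Y Z + calL M.I M.beta3KJ X Y Z)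

def betaKK : V → V → V → C := fun X Y Z =>
  (1/6:ℝ) • ((4:ℝ) • M.beta3KK X Y Z + calL M.I M.beta3KK X Y Z + calL M.J M.beta3KK X Y Z)

/-- the three-form `ψ^{(3)} = (1/12)(β_I^{(3)} + β_J^{(3)} + β_K^{(3)})` determining `ξ_{33}` -/
def psi3 : V → V → V → C := fun X Y Z =>
  (1/12:ℝ) • (M.beta3I X Y Z + M.beta3J X Y Z + M.beta3K X Y Z)

/-- the three-form `ψ^{(K)} = -(1/48)(β_I^{(K)} + β_J^{(K)} + β_K^{(K)})` determining `ξ_{KH}` -/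
def psiK : V → V → V → C := fun X Y Z =>
  (-(1/48:ℝ)) • (M.betaKI X Y Z + M.betaKJ X Y Z + M.betaKK X Y Z)

/-- the three-form `ψ^{(3)}_I` determining `ξ_{3H}` -/
def psi3I : V → V → V → C := fun X Y Z =>
  (-(1/8:ℝ)) • M.beta3I X Y Z
    + (1/48:ℝ) • ((3:ℝ) • (M.beta3I X Y Z + M.beta3J X Y Z + M.beta3K X Y Z)
        + calL M.I (fun a b c => M.beta3I a b c + M.beta3J a b c + M.beta3K a b c) X Y Z)

def psi3J : V → V → V → C := fun X Y Z =>
  (-(1/8:ℝ)) • M.beta3J X Y Z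
    + (1/48:ℝ) • ((3:ℝ) • (M.beta3I X Y Z + M.beta3J X Y Z + M.beta3K X Y Z)
        + calL M.J (fun a b c => M.beta3I a b c + M.beta3J a b c + M.beta3K a b c) X Y Z)

def psi3K : V → V → V → C := fun X Y Z =>
  (-(1/8:ℝ)) • M.beta3K X Y Z
    + (1/48:ℝ) • ((3:ℝ) • (M.beta3I X Y Z + M.beta3J X Y Z + M.beta3K X Y Z)
        + calL M.K (fun a b c => M.beta3I a b c + M.beta3J a b c + M.beta3K a b c) X Y Z)

/-- the three-form `ψ^{(K)}_I` determining `ξ_{K3}` -/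
def psiKI : V → V → V → C := fun X Y Z =>
  (-(1/2:ℝ)) • M.betaKI X Y Z
    + (1/6:ℝ) • (M.betaKI X Y Z + M.betaKJ X Y Z + M.betaKK X Y Z)

def psiKJ : V → V → V → C := fun X Y Z =>
  (-(1/2:ℝ)) • M.betaKJ X Y Z
    + (1/6:ℝ) • (M.betaKI X Y Z + M.betaKJ X Y Z + M.betaKK X Y Z)

def psiKK : V → V → V → C := fun X Y Z =>
  (-(1/2:ℝ)) • M.betaKK X Y Z
    + (1/6:ℝ) • (M.betaKI X Y Z + M.betaKJ X Y Z + M.betaKK X Y Z)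

/-- the one-form `θ^ξ` determining `ξ_{EH}`,
defined by `(6/n)(2n+1)(n-1) θ^ξ(X) = -⟨ξ_{e_i} e_i, X⟩` -/
def thetaXi : V → C := fun X =>
  (-((n:ℝ)/(6*(2*(n:ℝ)+1)*((n:ℝ)-1)))) • ∑ i, M.g (M.xi (M.frame i) (M.frame i)) X

/-- the local one-form `θ^ξ_I`, defined by `(2/n)(2n+1)(n-1) θ^ξ_I(X) = -⟨I ξ_{e_i} I e_i, X⟩` -/
def thetaXiI : V → C := fun X =>
  (-((n:ℝ)/(2*(2*(n:ℝ)+1)*((n:ℝ)-1)))) •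
    ∑ i, M.g (M.I (M.xi (M.frame i) (M.I (M.frame i)))) X

def thetaXiJ : V → C := fun X =>
  (-((n:ℝ)/(2*(2*(n:ℝ)+1)*((n:ℝ)-1)))) •
    ∑ i, M.g (M.J (M.xi (M.frame i) (M.J (M.frame i)))) X

def thetaXiK : V → C := fun X =>
  (-((n:ℝ)/(2*(2*(n:ℝ)+1)*((n:ℝ)-1)))) •
    ∑ i, M.g (M.K (M.xi (M.frame i) (M.K (M.frame i)))) X

/-- `α_I = -λ_I ⊗ g + (1/2)(J_(2) - J_(3)) ∇ω_K` -/
def alphaI : V → V → V → C := fun X Y Z =>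
  -(M.lambdaI X * M.g Y Z)
    + (1/2:ℝ) • (-(M.nab2 (M.omega M.K) X (M.J Y) Z) + M.nab2 (M.omega M.K) X Y (M.J Z))

def alphaJ : V → V → V → C := fun X Y Z =>
  -(M.lambdaJ X * M.g Y Z)
    + (1/2:ℝ) • (-(M.nab2 (M.omega M.I) X (M.K Y) Z) + M.nab2 (M.omega M.I) X Y (M.K Z))

def alphaK : V → V → V → C := fun X Y Z =>
  -(M.lambdaK X * M.g Y Z)
    + (1/2:ℝ) • (-(M.nab2 (M.omega M.J) X (M.I Y) Z) + M.nab2 (M.omega M.J) X Y (M.I Z))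

/-- the one-form `η_I(X) = α_I(e_i; e_i, X)` -/
def etaI : V → C := fun X => ∑ i, M.alphaI (M.frame i) (M.frame i) X

def etaJ : V → C := fun X => ∑ i, M.alphaJ (M.frame i) (M.frame i) X

def etaK : V → C := fun X => ∑ i, M.alphaK (M.frame i) (M.frame i) X

/-- the fundamental four-form `Ω = Σ_A ω_A ∧ ω_A` -/
def Omega4 : V → V → V → V → C := fun X Y Z W =>
  wedge22 (M.omega M.I) (M.omega M.I) X Y Z W
    + wedge22 (M.omega M.J) (M.omega M.J) X Y Z W
    + wedge22 (M.omega M.K) (M.omega M.K) X Y Z W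

/-- the one-form `θ^{d*Ω} = (1/3) Σ_A A Λ_A d*Ω` -/
def thetaDOmega : V → C := fun X =>
  (1/3:ℝ) • (act1 M.I (M.Lam M.I (M.codiff4 M.Omega4)) X
    + act1 M.J (M.Lam M.J (M.codiff4 M.Omega4)) X
    + act1 M.K (M.Lam M.K (M.codiff4 M.Omega4)) X)

/-- the vector-valued torsion: `g(W, T(X,Y)) = T(W,X,Y)` -/
def Tvec (T : V → V → V → C) : V → V → V := fun X Y => ∑ i, T (M.frame i) X Y • M.frame i

/-- the connection `∇ + (1/2) T` associated to a torsion (0,3)-tensor `T` -/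
def nabT (T : V → V → V → C) : V → V → V := fun X Y => M.nab X Y + (1/2:ℝ) • M.Tvec T X Y

/-- a connection is metric -/
def MetricConn (nab' : V → V → V) : Prop :=
  ∀ X Y Z, M.D X (M.g Y Z) = M.g (nab' X Y) Z + M.g Y (nab' X Z)

/-- a connection is quaternionic, with associated local one-forms `γ_I, γ_J, γ_K`:
`∇'_X I = γ_K(X) J - γ_J(X) K`, and cyclically -/
def QuatConn (nab' : V → V → V) (γI γJ γK : V → C) : Prop :=
  (∀ X Y, nab' X (M.I Y) - M.I (nab' X Y) = γK X • M.J Y - γJ X • M.K Y) ∧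
  (∀ X Y, nab' X (M.J Y) - M.J (nab' X Y) = γI X • M.K Y - γK X • M.I Y) ∧
  (∀ X Y, nab' X (M.K Y) - M.K (nab' X Y) = γJ X • M.I Y - γI X • M.J Y)

/-- the HKT condition: `I, J, K` integrable and there is a metric connection
`∇ + (1/2)T` with totally skew torsion making `I, J, K` parallel -/
def IsHKT : Prop :=
  (∀ X Y, M.nijV M.I X Y = 0) ∧ (∀ X Y, M.nijV M.J X Y = 0) ∧
  (∀ X Y, M.nijV M.K X Y = 0) ∧
  ∃ T : V → V → V → C, IsAlt3 T ∧ Lin3 T ∧ M.MetricConn (M.nabT T) ∧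
    (∀ X Y, M.nabT T X (M.I Y) = M.I (M.nabT T X Y)) ∧
    (∀ X Y, M.nabT T X (M.J Y) = M.J (M.nabT T X Y)) ∧
    (∀ X Y, M.nabT T X (M.K Y) = M.K (M.nabT T X Y))

/-- membership of a three-form in `KH`: type `{2,1}` for each `A` and `Λ_A ψ = 0` -/
def InKH3 (ψ : V → V → V → C) : Prop :=
  IsAlt3 ψ ∧ Lin3 ψ ∧
  calL M.I ψ = ψ ∧ calL M.J ψ = ψ ∧ calL M.K ψ = ψ ∧
  M.Lam M.I ψ = 0 ∧ M.Lam M.J ψ = 0 ∧ M.Lam M.K ψ = 0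

/-- the `(0,3)`-tensor of the `KH`-component of the torsion determined by `ψ^{(K)}`:
`3ψ - Σ_A A_(23) ψ` -/
def xiKH3 (ψ : V → V → V → C) : V → V → V → C := fun X Y Z =>
  (3:ℝ) • ψ X Y Z - (op23 M.I ψ X Y Z + op23 M.J ψ X Y Z + op23 M.K ψ X Y Z)

/-- the `(0,3)`-tensor of the `EH`-component of the torsion determined by the
one-form `θ`: `3 e_i ⊗ e_i ∧ θ - Σ_A (e_i ⊗ A e_i ∧ A θ + (2/n) A θ ⊗ ω_A)` -/
def xiEH3 (θ : V → C) : V → V → V → C := fun X Y Z =>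
  (3:ℝ) • ∑ i, M.g (M.frame i) X *
      (M.g (M.frame i) Y * θ Z - M.g (M.frame i) Z * θ Y)
  - ((∑ i, M.g (M.frame i) X *
        (M.g (M.I (M.frame i)) Y * act1 M.I θ Z - M.g (M.I (M.frame i)) Z * act1 M.I θ Y))
    + (∑ i, M.g (M.frame i) X *
        (M.g (M.J (M.frame i)) Y * act1 M.J θ Z - M.g (M.J (M.frame i)) Z * act1 M.J θ Y))
    + (∑ i, M.g (M.frame i) X *
        (M.g (M.K (M.frame i)) Y * act1 M.K θ Z - M.g (M.K (M.frame i)) Z * act1 M.K θ Y)))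
  - (2/(n:ℝ)) • (act1 M.I θ X * M.omega M.I Y Z + act1 M.J θ X * M.omega M.J Y Z
      + act1 M.K θ X * M.omega M.K Y Z)

/-- the intrinsic torsion lies in `(K+E)H`: it is the sum of a `KH`-tensor and an
`EH`-tensor as described in §3 of the paper -/
def inKEH : Prop :=
  ∃ (ψ : V → V → V → C) (θ : V → C), M.InKH3 ψ ∧ Lin1 θ ∧
    ∀ X Y Z, M.g Y (M.xi X Z) = M.xiKH3 ψ X Y Z + M.xiEH3 θ X Y Z

end derived

end AQH

namespace AQH

section complexforms

variable {n : ℕ} {C V : Type*} [CommRing C] [Algebra ℝ C] [AddCommGroup V] [Module C V]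
  [Module ℝ V] [IsScalarTower ℝ C V]

/-- Complex-valued functions, modelled as pairs (real part, imaginary part). -/
local notation "CC" => C × C

/-- multiplication by `i` on complexified functions -/
def muli (z : C × C) : C × C := (-z.2, z.1)

/-- the action of `A` on a complex-valued 2-form (`p = 2`, no sign) -/
def act2C (A : V → V) (ψ : V → V → C × C) : V → V → C × C := fun X Y => ψ (A X) (A Y)

/-- the action of `A` on a complex-valued 3-form (`p = 3`, sign `(-1)³`) -/
def act3C (A : V → V) (ψ : V → V → V → C × C) : V → V → V → C × C :=
  fun X Y Z => -ψ (A X) (A Y) (A Z)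

variable (M : AQH n C V)

/-- the exterior derivative of a complex-valued 2-form, componentwise -/
def d2C (ψ : V → V → C × C) : V → V → V → C × C := fun X Y Z =>
  (M.d2 (fun a b => (ψ a b).1) X Y Z, M.d2 (fun a b => (ψ a b).2) X Y Z)

/-- the operator `∂_A ψ = (1/2)(dψ + (-1)^p i A d (A ψ))` on complex 2-forms -/
def partialC (A : V → V) (ψ : V → V → C × C) : V → V → V → C × C := fun X Y Z =>
  (1/2:ℝ) • (M.d2C ψ X Y Z + muli (act3C A (M.d2C (act2C A ψ)) X Y Z))

/-- the operator `∂̄_A ψ = (1/2)(dψ - (-1)^p i A d (A ψ))` on complex 2-forms -/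
def partialBarC (A : V → V) (ψ : V → V → C × C) : V → V → V → C × C := fun X Y Z =>
  (1/2:ℝ) • (M.d2C ψ X Y Z - muli (act3C A (M.d2C (act2C A ψ)) X Y Z))

end complexforms

end AQH

/-!
For a compatible almost complex structure `A` and a metric connection `P`, consider the tensor
`b(X, Y, Z) = g(Y, (P_X A) Z)`, which is skew in `Y, Z` and satisfies `b(X, AY, Z) = b(X, Y, AZ)`.
For the Levi-Civita connection it gives `dω_A` by cyclic summation, and `N_A = 0` means that
`b(AX, Y, Z) = -b(X, AY, Z)`. Hence, if `P = ∇ + T/2` with `T` a three-form and `PA = 0`, then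
`A dω_A = 𝓛_A T`, and `N_A = 0` if and only if `𝓛_A T = T`. So the torsion of an HKT structure
equals both `J dω_J` and `K dω_K`.

Conversely, let `T = J dω_J = K dω_K` and `N_J = 0`. Then `PJ = 0`, and the tensor
`b(X, Y, Z) = g(Y, (P_X K) Z)` vanishes: from `T = K dω_K` one gets `b(KX, KY, Z) = -b(X, Y, Z)`,
whereas `JK = -KJ` and `PJ = 0` give `b(X, JY, JZ) = -b(X, Y, Z)`; since `J` and `K` anticommute,
these two symmetries are incompatible unless `b = 0`. Now `P` preserves `J` and `K`, hence `I = JK`,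
and `𝓛_J T = 𝓛_K T = T` forces `𝓛_I T = T`, so that all three structures are integrable.
-/

namespace AQH

section tensors

theorem eq_zero_of_symm_of_skew {α W : Type*} [AddGroup W] [IsAddTorsionFree W]
    {a : α → α → α → W} (symm : ∀ X Y Z, a X Y Z = a Y X Z)
    (skew : ∀ X Y Z, a X Y Z = -a X Z Y) (X Y Z : α) : a X Y Z = 0 := by
  rw [← self_eq_neg]
  calc a X Y Z = a Y X Z := symm X Y Z
    _ = -a Y Z X := skew Y X Z
    _ = -a Z Y X := by rw [symm]
    _ = a Z X Y := by rw [skew, neg_neg]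
    _ = a X Z Y := symm Z X Y
    _ = -a X Y Z := skew X Z Y

theorem eq_zero_of_map_map_of_anticomm {V W : Type*} [Neg V] [AddGroup W] [IsAddTorsionFree W]
    {A B : V → V} {b : V → V → V → W} (hAB : ∀ X, A (B X) = -B (A X))
    (neg_middle : ∀ X Y Z, b X (-Y) Z = -b X Y Z)
    (map_left : ∀ X Y Z, b (A X) (A Y) Z = -b X Y Z)
    (map_right : ∀ X Y Z, b X (B Y) (B Z) = -b X Y Z) (X Y Z : V) : b X Y Z = 0 := by
  rw [← self_eq_neg]
  calc b X Y Z = -b X (B Y) (B Z) := by rw [map_right, neg_neg]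
    _ = b (A X) (A (B Y)) (B Z) := (map_left X (B Y) (B Z)).symm
    _ = -b (A X) (B (A Y)) (B Z) := by rw [hAB, neg_middle]
    _ = b (A X) (A Y) Z := by rw [map_right, neg_neg]
    _ = -b X Y Z := map_left X Y Z

variable {C V : Type*} [CommRing C] [AddCommGroup V] [Module C V]

theorem isLinearMap_of_map_smul_add {W : Type*} [AddCommGroup W] [Module C W] {F : V → W}
    (hF : ∀ (f : C) X Y, F (f • X + Y) = f • F X + F Y) : IsLinearMap C F := by
  have map_zero : F 0 = 0 := by simpa using hF 1 0 0
  exact ⟨fun X Y => by simpa using hF 1 X Y, fun f X => by simpa [map_zero] using hF f X 0⟩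

/-- A three-form: an alternating tensor that is `C`-linear in its first argument, hence in every
argument. -/
structure IsThreeForm (T : V → V → V → C) : Prop where
  alt : IsAlt3 T
  lin : Lin3 T

namespace IsThreeForm

variable {T : V → V → V → C} (hT : IsThreeForm T)
include hT

theorem swap₁₂ (X Y Z : V) : T Y X Z = -T X Y Z := hT.alt.1 X Y Z

theorem swap₂₃ (X Y Z : V) : T X Z Y = -T X Y Z := hT.alt.2 X Y Z

theorem rotate (X Y Z : V) : T Y Z X = T X Y Z := by rw [hT.swap₂₃, hT.swap₁₂, neg_neg]

theorem isLinearMap (Y Z : V) : IsLinearMap C fun X => T X Y Z :=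
  isLinearMap_of_map_smul_add fun f X X' => hT.lin f X X' Y Z

theorem neg₁ (X Y Z : V) : T (-X) Y Z = -T X Y Z := (hT.isLinearMap Y Z).map_neg X

theorem neg₂ (X Y Z : V) : T X (-Y) Z = -T X Y Z := by
  rw [hT.swap₁₂, hT.neg₁, hT.swap₁₂, neg_neg]

theorem neg₃ (X Y Z : V) : T X Y (-Z) = -T X Y Z := by
  rw [hT.swap₂₃, hT.neg₂, hT.swap₂₃, neg_neg]

theorem act3 {A : V → V} (hA : IsLinearMap C A) : IsThreeForm (act3 A T) where
  alt := ⟨fun _ _ _ => congrArg Neg.neg (hT.swap₁₂ _ _ _),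
    fun _ _ _ => congrArg Neg.neg (hT.swap₂₃ _ _ _)⟩
  lin f X X' Y Z := by
    simp only [AQH.act3, hA.map_add, hA.map_smul]
    rw [hT.lin f]
    ring

theorem act3_map_of_sq {A : V → V} (hA : ∀ X, A (A X) = -X) (X Y Z : V) :
    AQH.act3 A T (A X) (A Y) (A Z) = T X Y Z := by
  simp only [AQH.act3, hA, hT.neg₁, hT.neg₂, hT.neg₃, neg_neg]

/-- Expanding `𝓛_A T` by `𝓛_B T = T`, and `𝓛_B T` by `𝓛_A T = T`, produces `𝓛_{AB} T` plus,
respectively minus, the same mixed terms, which therefore cancel. -/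
theorem calL_comp_of_anticomm [Algebra ℝ C] {A B : V → V} (hAB : ∀ X, B (A X) = -A (B X))
    (hA : calL A T = T) (hB : calL B T = T) : calL (A ∘ B) T = T := by
  have expandA (X Y Z) : T (A X) (A Y) Z + T (A X) Y (A Z) + T X (A Y) (A Z) = T X Y Z :=
    congrFun₃ hA X Y Z
  have expandB (X Y Z) : T (B X) (B Y) Z + T (B X) Y (B Z) + T X (B Y) (B Z) = T X Y Z :=
    congrFun₃ hB X Y Z
  funext X Y Z
  have a₁ := expandA (B X) (B Y) Z
  have a₂ := expandA (B X) Y (B Z)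
  have a₃ := expandA X (B Y) (B Z)
  have b₁ := expandB (A X) (A Y) Z
  have b₂ := expandB (A X) Y (A Z)
  have b₃ := expandB X (A Y) (A Z)
  simp only [hAB, hT.neg₁, hT.neg₂, hT.neg₃, neg_neg] at b₁ b₂ b₃
  simp only [calL, op12, op13, op23, Function.comp_apply]
  linear_combination (norm := module) (1 / 2 : ℝ) •
    (a₁ + a₂ + a₃ + b₁ + b₂ + b₃ + expandA X Y Z + expandB X Y Z)

end IsThreeForm

end tensors

section structureEquations

variable {n : ℕ} {C V : Type*} [CommRing C] [Algebra ℝ C] [AddCommGroup V] [Module C V]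

variable (M : AQH n C V)

/-- The Riemannian metric as a bundled bilinear form, giving access to the library of those. -/
def metric : LinearMap.BilinForm C V :=
  LinearMap.mk₂ C M.g M.g_add M.g_smul
    (fun X Y Z => by simp only [M.g_symm X, M.g_add])
    (fun f X Y => by simp only [M.g_symm X, M.g_smul, smul_eq_mul])

theorem g_zero_right (X : V) : M.g X 0 = 0 := (M.metric X).map_zero

theorem g_add_right (X Y Z : V) : M.g X (Y + Z) = M.g X Y + M.g X Z := (M.metric X).map_add Y Z

theorem g_smul_right (f : C) (X Y : V) : M.g X (f • Y) = f * M.g X Y := (M.metric X).map_smul f Y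

theorem g_neg_left (X Y : V) : M.g (-X) Y = -M.g X Y := M.metric.map_neg₂ X Y

theorem g_neg_right (X Y : V) : M.g X (-Y) = -M.g X Y := (M.metric X).map_neg Y

theorem g_sub_left (X Y Z : V) : M.g (X - Y) Z = M.g X Z - M.g Y Z := M.metric.map_sub₂ X Y Z

theorem g_sub_right (X Y Z : V) : M.g X (Y - Z) = M.g X Y - M.g X Z := (M.metric X).map_sub Y Z

theorem eq_of_forall_g_eq {X Y : V} (h : ∀ W, M.g W X = M.g W Y) : X = Y := by
  rw [M.frame_span X, M.frame_span Y]
  simp only [M.g_symm _ (M.frame _), h]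

theorem apply_eq_sum_frame {φ : V → C} (hφ : IsLinearMap C φ) (X : V) :
    φ X = ∑ i, M.g X (M.frame i) * φ (M.frame i) := by
  conv_lhs => rw [M.frame_span X, ← IsLinearMap.mk'_apply hφ, map_sum]
  simp only [map_smul, IsLinearMap.mk'_apply, smul_eq_mul]

theorem D_neg (X : V) (f : C) : M.D X (-f) = -M.D X f :=
  (AddMonoidHom.mk' (M.D X) (M.D_add X)).map_neg f

/-- An almost complex structure compatible with the metric. -/
structure IsAlmostHermitian (A : V → V) : Prop extends IsLinearMap C A where
  sq : ∀ X, A (A X) = -X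
  isometry : ∀ X Y, M.g (A X) (A Y) = M.g X Y

/-- The structure `A` is parallel for the connection `P`. -/
def IsParallel (P : V → V → V) (A : V → V) : Prop := ∀ X Y, P X (A Y) = A (P X Y)

/-- The tensor `g(Y, (P_X A) Z)`, which is the covariant derivative `(P_X ω_A)(Y, Z)` of the Kähler
form when the connection `P` is metric. -/
def covOmega (P : V → V → V) (A : V → V) (X Y Z : V) : C := M.g Y (P X (A Z) - A (P X Z))

/-- The three-form `A dω_A`: the torsion of the Bismut connection when `A` is integrable. -/
def bismutTorsion (A : V → V) : V → V → V → C := act3 A (M.d2 (M.omega A))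

variable {M} {P : V → V → V} {A : V → V}

theorem IsAlmostHermitian.g_map_left (hA : M.IsAlmostHermitian A) (X Y : V) :
    M.g (A X) Y = -M.g X (A Y) := by
  rw [← hA.isometry X, hA.sq, g_neg_right, neg_neg]

theorem MetricConn.neg_right (hP : M.MetricConn P) (X Y : V) : P X (-Y) = -P X Y := by
  refine M.eq_of_forall_g_eq fun W => ?_
  have h := hP X W (-Y)
  rw [g_neg_right, D_neg, hP X W Y, g_neg_right] at h
  rw [g_neg_right]
  linear_combination -h

theorem isParallel_iff_covOmega_eq_zero :
    IsParallel P A ↔ ∀ X Y Z, M.covOmega P A X Y Z = 0 := by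
  refine ⟨fun h X Y Z => by rw [covOmega, h, sub_self, g_zero_right], fun h X Z => ?_⟩
  refine M.eq_of_forall_g_eq fun W => ?_
  rw [← sub_eq_zero, ← g_sub_right]
  exact h X W Z

theorem covOmega_neg_middle (X Y Z : V) : M.covOmega P A X (-Y) Z = -M.covOmega P A X Y Z :=
  M.g_neg_left _ _

theorem covOmega_swap (hP : M.MetricConn P) (hA : M.IsAlmostHermitian A) (X Y Z : V) :
    M.covOmega P A X Z Y = -M.covOmega P A X Y Z := by
  have omega_skew : M.g Y (A Z) = -M.g Z (A Y) := by rw [M.g_symm, hA.g_map_left]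
  have hYZ := hP X Y (A Z)
  have hZY := hP X Z (A Y)
  rw [omega_skew, D_neg, M.g_symm (P X Y), hA.g_map_left] at hYZ
  rw [M.g_symm (P X Z), hA.g_map_left] at hZY
  simp only [covOmega, g_sub_right]
  linear_combination -hYZ - hZY

theorem covOmega_map_middle (hP : M.MetricConn P) (hA : M.IsAlmostHermitian A) (X Y Z : V) :
    M.covOmega P A X (A Y) Z = M.covOmega P A X Y (A Z) := by
  simp only [covOmega, hA.g_map_left, hA.map_sub, hA.sq, hP.neg_right, g_sub_right, g_neg_right]
  ring

theorem covOmega_map_map (hP : M.MetricConn P) (hA : M.IsAlmostHermitian A) (X Y Z : V) :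
    M.covOmega P A X (A Y) (A Z) = -M.covOmega P A X Y Z := by
  rw [← covOmega_map_middle hP hA, hA.sq, covOmega_neg_middle]

theorem covOmega_map_map_of_anticomm {B : V → V} (hP : M.MetricConn P)
    (hA : M.IsAlmostHermitian A) (hAB : ∀ X, B (A X) = -A (B X)) (hPA : IsParallel P A)
    (X Y Z : V) : M.covOmega P B X (A Y) (A Z) = -M.covOmega P B X Y Z := by
  have hBA : P X (B (A Z)) - B (P X (A Z)) = -A (P X (B Z) - B (P X Z)) := by
    rw [hAB, hP.neg_right, hPA, hPA, hAB, hA.map_sub]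
    abel
  rw [covOmega, hBA, g_neg_right, hA.isometry, covOmega]

theorem d2_omega_eq_cyclic_sum (hA : M.IsAlmostHermitian A) (X Y Z : V) :
    M.d2 (M.omega A) X Y Z =
      M.covOmega M.nab A X Y Z + M.covOmega M.nab A Y Z X + M.covOmega M.nab A Z X Y := by
  have omega_skew (Y Z) : M.g Y (A Z) = -M.g Z (A Y) := by rw [M.g_symm, hA.g_map_left]
  simp only [d2, omega, covOmega, ← M.torsion_free, g_sub_left, g_sub_right]
  rw [omega_skew X Z, D_neg]
  simp only [M.nab_metric]
  linear_combination omega_skew X (M.nab Z Y) + omega_skew Y (M.nab X Z) +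
    omega_skew Z (M.nab Y X)

theorem covOmega_nab_smul_add (hA : M.IsAlmostHermitian A) (f : C) (X X' Y Z : V) :
    M.covOmega M.nab A (f • X + X') Y Z =
      f * M.covOmega M.nab A X Y Z + M.covOmega M.nab A X' Y Z := by
  simp only [covOmega, M.nab_addX, M.nab_smulX, hA.map_add, hA.map_smul, g_sub_right, g_add_right,
    g_smul_right]
  ring

theorem covOmega_smul_add_middle (f : C) (X Y Y' Z : V) :
    M.covOmega P A X (f • Y + Y') Z = f * M.covOmega P A X Y Z + M.covOmega P A X Y' Z := by
  simp only [covOmega, M.g_add, M.g_smul]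

theorem isThreeForm_d2_omega (hA : M.IsAlmostHermitian A) : IsThreeForm (M.d2 (M.omega A)) := by
  have swap := covOmega_swap M.nab_metric hA
  refine ⟨⟨fun X Y Z => ?_, fun X Y Z => ?_⟩, fun f X X' Y Z => ?_⟩ <;>
    simp only [d2_omega_eq_cyclic_sum hA]
  · linear_combination swap X Y Z + swap Y Z X + swap Z X Y
  · linear_combination swap X Y Z + swap Y Z X + swap Z X Y
  · simp only [swap _ (_ • _ + _), covOmega_nab_smul_add hA, covOmega_smul_add_middle]
    rw [swap Y Z X, swap Y Z X']
    ring

theorem isThreeForm_bismutTorsion (hA : M.IsAlmostHermitian A) :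
    IsThreeForm (M.bismutTorsion A) :=
  (isThreeForm_d2_omega hA).act3 hA.toIsLinearMap

theorem bismutTorsion_map (hA : M.IsAlmostHermitian A) (X Y Z : V) :
    M.bismutTorsion A (A X) (A Y) (A Z) = M.d2 (M.omega A) X Y Z :=
  (isThreeForm_d2_omega hA).act3_map_of_sq hA.sq X Y Z

theorem g_nijV (hA : M.IsAlmostHermitian A) (W X Y : V) :
    M.g W (M.nijV A X Y) =
      (M.covOmega M.nab A (A Y) W X + M.covOmega M.nab A Y (A W) X) -
        (M.covOmega M.nab A (A X) W Y + M.covOmega M.nab A X (A W) Y) := by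
  simp only [nijV, covOmega, ← M.torsion_free, g_sub_right, g_add_right, hA.map_sub, hA.g_map_left,
    hA.sq, g_neg_right]
  ring

theorem nijV_eq_zero_iff (hA : M.IsAlmostHermitian A) :
    (∀ X Y, M.nijV A X Y = 0) ↔
      ∀ X Y Z, M.covOmega M.nab A (A X) Y Z + M.covOmega M.nab A X (A Y) Z = 0 := by
  have : IsAddTorsionFree C := .of_isTorsionFree ℝ C
  have swap := covOmega_swap M.nab_metric hA
  have map_middle := covOmega_map_middle M.nab_metric hA
  have skew (X Y Z) : M.covOmega M.nab A (A X) Y Z + M.covOmega M.nab A X (A Y) Z =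
      -(M.covOmega M.nab A (A X) Z Y + M.covOmega M.nab A X (A Z) Y) := by
    rw [swap (A X) Y Z, map_middle X Z Y, swap X (A Y) Z]
    ring
  constructor
  · refine fun hN => eq_zero_of_symm_of_skew (fun X Y Z => ?_) skew
    have h := g_nijV hA Z X Y
    rw [hN, g_zero_right] at h
    rw [skew X Y Z, skew Y X Z]
    linear_combination -h
  · refine fun h X Y => M.eq_of_forall_g_eq fun W => ?_
    rw [g_nijV hA, h, h, sub_self, g_zero_right]

theorem g_Tvec {T : V → V → V → C} (hT : IsThreeForm T) (W X Y : V) :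
    M.g W (M.Tvec T X Y) = T W X Y := by
  rw [M.apply_eq_sum_frame (hT.isLinearMap X Y), Tvec]
  change M.metric W _ = _
  simp only [map_sum, map_smul, smul_eq_mul, mul_comm]
  rfl

end structureEquations

section torsion

variable {n : ℕ} {C V : Type*} [CommRing C] [Algebra ℝ C] [AddCommGroup V] [Module C V]
  [Module ℝ V] [IsScalarTower ℝ C V] {M : AQH n C V} {A : V → V} {T : V → V → V → C}

theorem g_nabT (hT : IsThreeForm T) (W X Y : V) :
    M.g W (M.nabT T X Y) = M.g W (M.nab X Y) + (1 / 2 : ℝ) • T W X Y := by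
  rw [nabT, g_add_right, ← algebraMap_smul C, g_smul_right, g_Tvec hT, Algebra.smul_def]

theorem metricConn_nabT (hT : IsThreeForm T) : M.MetricConn (M.nabT T) := by
  intro X Y Z
  rw [M.g_symm (M.nabT T X Y) Z, g_nabT hT, g_nabT hT, M.nab_metric, M.g_symm (M.nab X Y) Z,
    ← hT.rotate Z X Y, hT.swap₁₂ X Y Z]
  module

theorem covOmega_nabT (hT : IsThreeForm T) (hA : M.IsAlmostHermitian A) (X Y Z : V) :
    M.covOmega (M.nabT T) A X Y Z =
      M.covOmega M.nab A X Y Z - (1 / 2 : ℝ) • (T X Y (A Z) + T X (A Y) Z) := by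
  have g_map_right (W) : M.g Y (A W) = -M.g (A Y) W := by rw [hA.g_map_left, neg_neg]
  simp only [covOmega, g_sub_right, g_map_right (M.nabT T X Z), g_map_right (M.nab X Z),
    g_nabT hT, hT.swap₁₂ X]
  module

theorem d2_omega_eq_cyclic_sum_nabT (hT : IsThreeForm T) (hA : M.IsAlmostHermitian A)
    (X Y Z : V) :
    M.d2 (M.omega A) X Y Z =
      M.covOmega (M.nabT T) A X Y Z + M.covOmega (M.nabT T) A Y Z X +
        M.covOmega (M.nabT T) A Z X Y + (T (A X) Y Z + T X (A Y) Z + T X Y (A Z)) := by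
  rw [d2_omega_eq_cyclic_sum hA, covOmega_nabT hT hA, covOmega_nabT hT hA, covOmega_nabT hT hA,
    hT.rotate (A X) Y Z, hT.rotate X Y (A Z), ← hT.rotate Z X (A Y), ← hT.rotate Z (A X) Y]
  module

theorem bismutTorsion_eq_calL (hT : IsThreeForm T) (hA : M.IsAlmostHermitian A)
    (hPA : IsParallel (M.nabT T) A) : M.bismutTorsion A = calL A T := by
  rw [isParallel_iff_covOmega_eq_zero (M := M)] at hPA
  funext X Y Z
  simp only [bismutTorsion, act3, d2_omega_eq_cyclic_sum_nabT hT hA, hPA, hA.sq, hT.neg₁, hT.neg₂,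
    hT.neg₃, calL, op12, op13, op23]
  ring

theorem nijV_eq_zero_iff_calL_eq (hT : IsThreeForm T) (hA : M.IsAlmostHermitian A)
    (hPA : IsParallel (M.nabT T) A) : (∀ X Y, M.nijV A X Y = 0) ↔ calL A T = T := by
  rw [isParallel_iff_covOmega_eq_zero (M := M)] at hPA
  have covOmega_nab (X Y Z) :
      M.covOmega M.nab A X Y Z = (1 / 2 : ℝ) • (T X Y (A Z) + T X (A Y) Z) :=
    sub_eq_zero.mp ((covOmega_nabT hT hA X Y Z).symm.trans (hPA X Y Z))
  have obstruction (X Y Z) :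
      M.covOmega M.nab A (A X) Y Z + M.covOmega M.nab A X (A Y) Z =
        (1 / 2 : ℝ) • (calL A T X Y Z - T X Y Z) := by
    simp only [covOmega_nab, hA.sq, hT.neg₂, calL, op12, op13, op23]
    module
  simp only [nijV_eq_zero_iff hA, obstruction, smul_eq_zero, one_div, inv_eq_zero,
    OfNat.ofNat_ne_zero, false_or, sub_eq_zero, funext_iff]

theorem eq_bismutTorsion (hT : IsThreeForm T) (hA : M.IsAlmostHermitian A)
    (hPA : IsParallel (M.nabT T) A) (hN : ∀ X Y, M.nijV A X Y = 0) : T = M.bismutTorsion A := by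
  rw [bismutTorsion_eq_calL hT hA hPA, (nijV_eq_zero_iff_calL_eq hT hA hPA).mp hN]

theorem isParallel_nabT_bismutTorsion (hA : M.IsAlmostHermitian A)
    (hN : ∀ X Y, M.nijV A X Y = 0) : IsParallel (M.nabT (M.bismutTorsion A)) A := by
  have map_left (X Y Z) : M.covOmega M.nab A (A X) Y Z = -M.covOmega M.nab A X (A Y) Z :=
    eq_neg_of_add_eq_zero_left ((nijV_eq_zero_iff hA).mp hN X Y Z)
  have map_map := covOmega_map_map M.nab_metric hA
  have torsion (X Y Z) : M.bismutTorsion A X Y Z = -(M.covOmega M.nab A X (A Y) Z +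
      M.covOmega M.nab A Y (A Z) X + M.covOmega M.nab A Z (A X) Y) := by
    simp only [bismutTorsion, act3, d2_omega_eq_cyclic_sum hA, map_map, map_left]
    ring
  rw [isParallel_iff_covOmega_eq_zero (M := M)]
  intro X Y Z
  rw [covOmega_nabT (isThreeForm_bismutTorsion hA) hA, torsion, torsion]
  simp only [hA.sq, covOmega_neg_middle, map_left, map_map]
  module

theorem covOmega_nabT_bismutTorsion_map_map (hA : M.IsAlmostHermitian A) (X Y Z : V) :
    M.covOmega (M.nabT (M.bismutTorsion A)) A (A X) (A Y) Z =
      -M.covOmega (M.nabT (M.bismutTorsion A)) A X Y Z := by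
  have : IsAddTorsionFree C := .of_isTorsionFree ℝ C
  have hT := isThreeForm_bismutTorsion hA
  have hP := metricConn_nabT (M := M) hT
  have torsion_map := bismutTorsion_map (M := M) hA
  set T := M.bismutTorsion A
  set b := M.covOmega (M.nabT T) A
  have swap (X Y Z) : b X Z Y = -b X Y Z := covOmega_swap hP hA X Y Z
  have map_middle (X Y Z) : b X (A Y) Z = b X Y (A Z) := covOmega_map_middle hP hA X Y Z
  have map_map (X Y Z) : b X (A Y) (A Z) = -b X Y Z := covOmega_map_map hP hA X Y Z
  have cyclic_sum (X Y Z) : b X Y Z + b Y Z X + b Z X Y =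
      T (A X) (A Y) (A Z) - (T (A X) Y Z + T X (A Y) Z + T X Y (A Z)) := by
    rw [torsion_map, d2_omega_eq_cyclic_sum_nabT hT hA]
    ring
  have cyclic_sum_map_map (X Y Z) : b X (A Y) (A Z) + b (A Y) (A Z) X + b (A Z) X (A Y) =
      -(b X Y Z + b Y Z X + b Z X Y) := by
    simp only [cyclic_sum, hA.sq, hT.neg₂, hT.neg₃]
    ring
  refine eq_neg_of_add_eq_zero_left
    (eq_zero_of_symm_of_skew (a := fun X Y Z => b (A X) (A Y) Z + b X Y Z)
      (fun X Y Z => ?_) (fun X Y Z => ?_) X Y Z)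
  · linear_combination cyclic_sum_map_map Z X Y - map_map Z X Y - swap (A Y) (A X) Z - swap Y X Z
  · linear_combination swap (A X) Z (A Y) + map_middle (A X) Z Y + swap X Z Y

theorem isParallel_nabT_bismutTorsion_of_anticomm {B : V → V} (hA : M.IsAlmostHermitian A)
    (hB : M.IsAlmostHermitian B) (hAB : ∀ X, B (A X) = -A (B X))
    (hPA : IsParallel (M.nabT (M.bismutTorsion B)) A) :
    IsParallel (M.nabT (M.bismutTorsion B)) B := by
  have : IsAddTorsionFree C := .of_isTorsionFree ℝ C
  have hP := metricConn_nabT (M := M) (isThreeForm_bismutTorsion hB)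
  rw [isParallel_iff_covOmega_eq_zero (M := M)]
  exact eq_zero_of_map_map_of_anticomm hAB covOmega_neg_middle
    (covOmega_nabT_bismutTorsion_map_map hB) (covOmega_map_map_of_anticomm hP hA hAB hPA)

end torsion

section complexForms

variable {n : ℕ} {C V : Type*} [CommRing C] [Algebra ℝ C] [AddCommGroup V] [Module C V]
  (M : AQH n C V)

theorem d2_neg (ψ : V → V → C) (X Y Z : V) :
    M.d2 (fun a b => -ψ a b) X Y Z = -M.d2 ψ X Y Z := by
  simp only [d2, D_neg]
  ring

theorem partialBarC_conj (A : V → V) (ψ : V → V → C × C) (X Y Z : V) :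
    M.partialBarC A (fun a b => ((ψ a b).1, -(ψ a b).2)) X Y Z =
      ((M.partialC A ψ X Y Z).1, -(M.partialC A ψ X Y Z).2) := by
  simp only [partialBarC, partialC, d2C, act3C, act2C, muli, d2_neg, Prod.ext_iff, Prod.smul_fst,
    Prod.smul_snd, Prod.fst_add, Prod.snd_add, Prod.fst_sub, Prod.snd_sub, Prod.fst_neg,
    Prod.snd_neg]
  constructor <;> module

theorem partialC_of_antiinvariant {A : V → V} {α β : V → V → C}
    (hα : ∀ X Y, α (A X) (A Y) = -α X Y) (hβ : ∀ X Y, β (A X) (A Y) = -β X Y) (X Y Z : V) :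
    M.partialC A (fun a b => (α a b, β a b)) X Y Z =
      (1 / 2 : ℝ) • (M.d2 α X Y Z + act3 A (M.d2 β) X Y Z,
        M.d2 β X Y Z - act3 A (M.d2 α) X Y Z) := by
  simp only [partialC, d2C, act3C, act2C, act3, muli, hα, hβ, d2_neg, Prod.neg_mk, Prod.mk_add_mk,
    neg_neg, sub_eq_add_neg]

end complexForms

section quaternions

variable {n : ℕ} {C V : Type*} [CommRing C] [Algebra ℝ C] [AddCommGroup V] [Module C V]
  (M : AQH n C V)

theorem isAlmostHermitian_I : M.IsAlmostHermitian M.I :=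
  ⟨isLinearMap_of_map_smul_add M.I_lin, M.I_sq, M.I_metric⟩

theorem isAlmostHermitian_J : M.IsAlmostHermitian M.J :=
  ⟨isLinearMap_of_map_smul_add M.J_lin, M.J_sq, M.J_metric⟩

theorem J_I (X : V) : M.J (M.I X) = -M.K X := by rw [M.K_def, M.anticomm, neg_neg]

theorem I_K (X : V) : M.I (M.K X) = -M.J X := by rw [M.K_def, M.I_sq]

theorem K_I (X : V) : M.K (M.I X) = M.J X := by
  rw [M.K_def, J_I, M.isAlmostHermitian_I.map_neg, I_K, neg_neg]

theorem J_K (X : V) : M.J (M.K X) = M.I X := by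
  rw [← neg_inj, ← M.isAlmostHermitian_J.map_neg, ← J_I, M.J_sq]

theorem K_J (X : V) : M.K (M.J X) = -M.I X := by
  rw [M.K_def, M.J_sq, M.isAlmostHermitian_I.map_neg]

theorem isAlmostHermitian_K : M.IsAlmostHermitian M.K where
  toIsLinearMap := isLinearMap_of_map_smul_add M.K_lin
  sq X := by rw [M.K_def X, K_I, M.J_sq]
  isometry X Y := by rw [M.K_def, M.K_def, M.I_metric, M.J_metric]

theorem omega_J_antiinvariant_I (X Y : V) :
    M.omega M.J (M.I X) (M.I Y) = -M.omega M.J X Y := by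
  rw [omega, J_I, M.K_def, g_neg_right, M.I_metric, omega]

theorem omega_K_antiinvariant_I (X Y : V) :
    M.omega M.K (M.I X) (M.I Y) = -M.omega M.K X Y := by
  rw [omega, K_I, ← neg_neg (M.J Y), ← I_K, g_neg_right, M.I_metric, omega]

theorem act3_J_eq_act3_K_iff {ψ φ : V → V → V → C} (hψ : IsThreeForm ψ) (hφ : IsThreeForm φ) :
    act3 M.J ψ = act3 M.K φ ↔
      ∀ X Y Z, ψ X Y Z + act3 M.I φ X Y Z = 0 ∧ φ X Y Z - act3 M.I ψ X Y Z = 0 := by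
  constructor
  · intro h X Y Z
    have hJ := congrFun₃ h (M.J X) (M.J Y) (M.J Z)
    have hK := congrFun₃ h (M.K X) (M.K Y) (M.K Z)
    rw [hψ.act3_map_of_sq M.J_sq] at hJ
    rw [hφ.act3_map_of_sq M.isAlmostHermitian_K.sq] at hK
    simp only [act3, K_J, J_K, hφ.neg₁, hφ.neg₂, hφ.neg₃] at hJ hK ⊢
    exact ⟨by linear_combination hJ, by linear_combination -hK⟩
  · intro h
    funext X Y Z
    have hJ := (h (M.J X) (M.J Y) (M.J Z)).1
    simp only [act3, ← M.K_def] at hJ ⊢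
    linear_combination -hJ

theorem partialC_I_omega_eq_zero_iff :
    (∀ X Y Z, M.partialC M.I (fun a b => (M.omega M.J a b, M.omega M.K a b)) X Y Z = 0) ↔
      act3 M.J (M.d2 (M.omega M.J)) = act3 M.K (M.d2 (M.omega M.K)) := by
  rw [act3_J_eq_act3_K_iff M (isThreeForm_d2_omega M.isAlmostHermitian_J)
    (isThreeForm_d2_omega M.isAlmostHermitian_K)]
  simp only [partialC_of_antiinvariant M M.omega_J_antiinvariant_I M.omega_K_antiinvariant_I,
    smul_eq_zero, one_div, inv_eq_zero, OfNat.ofNat_ne_zero, false_or, Prod.mk_eq_zero]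

theorem partialBarC_I_omega_eq_zero_iff :
    (∀ X Y Z, M.partialBarC M.I (fun a b => (M.omega M.J a b, -M.omega M.K a b)) X Y Z = 0) ↔
      act3 M.J (M.d2 (M.omega M.J)) = act3 M.K (M.d2 (M.omega M.K)) := by
  rw [← partialC_I_omega_eq_zero_iff]
  refine forall₃_congr fun X Y Z => ?_
  rw [M.partialBarC_conj M.I fun a b => (M.omega M.J a b, M.omega M.K a b), Prod.mk_eq_zero,
    neg_eq_zero, ← Prod.mk_eq_zero]

variable [Module ℝ V] [IsScalarTower ℝ C V] {M}

theorem IsHKT.bismutTorsion_J_eq_bismutTorsion_K (h : M.IsHKT) :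
    M.bismutTorsion M.J = M.bismutTorsion M.K := by
  obtain ⟨-, hNJ, hNK, T, hAlt, hLin, -, -, hPJ, hPK⟩ := h
  have hT : IsThreeForm T := ⟨hAlt, hLin⟩
  rw [← eq_bismutTorsion hT M.isAlmostHermitian_J hPJ hNJ,
    ← eq_bismutTorsion hT M.isAlmostHermitian_K hPK hNK]

theorem isHKT_of_bismutTorsion_J_eq_bismutTorsion_K
    (hJK : M.bismutTorsion M.J = M.bismutTorsion M.K) (hNJ : ∀ X Y, M.nijV M.J X Y = 0) :
    M.IsHKT := by
  have hJ := M.isAlmostHermitian_J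
  have hK := M.isAlmostHermitian_K
  have anticomm (X) : M.K (M.J X) = -M.J (M.K X) := by rw [K_J, J_K]
  have hT := isThreeForm_bismutTorsion hK
  have hPJ := isParallel_nabT_bismutTorsion hJ hNJ
  rw [hJK] at hPJ
  have hPK := isParallel_nabT_bismutTorsion_of_anticomm hJ hK anticomm hPJ
  set T := M.bismutTorsion M.K
  have hPI : IsParallel (M.nabT T) M.I := fun X Y => by rw [← J_K, hPJ, hPK, J_K]
  have hLJ : calL M.J T = T := (nijV_eq_zero_iff_calL_eq hT hJ hPJ).mp hNJ
  have hLK : calL M.K T = T := (bismutTorsion_eq_calL hT hK hPK).symm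
  have hLI : calL M.I T = T := by
    rw [← funext M.J_K]
    exact hT.calL_comp_of_anticomm anticomm hLJ hLK
  exact ⟨(nijV_eq_zero_iff_calL_eq hT M.isAlmostHermitian_I hPI).mpr hLI, hNJ,
    (nijV_eq_zero_iff_calL_eq hT hK hPK).mpr hLK,
    T, hT.alt, hT.lin, metricConn_nabT hT, hPI, hPJ, hPK⟩

variable (M)

theorem isHKT_iff :
    M.IsHKT ↔ act3 M.J (M.d2 (M.omega M.J)) = act3 M.K (M.d2 (M.omega M.K)) ∧
      ∀ X Y, M.nijV M.J X Y = 0 :=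
  ⟨fun h => ⟨h.bismutTorsion_J_eq_bismutTorsion_K, h.2.1⟩,
    fun ⟨hJK, hNJ⟩ => isHKT_of_bismutTorsion_J_eq_bismutTorsion_K hJK hNJ⟩

end quaternions

end AQH

open AQH in
/-- For an almost hyperHermitian manifold `(M, I, J, K, g)` the
following are equivalent: (1) `M` is HKT; (2) `J dω_J = K dω_K` and `N_J = 0`;
(3) `∂_I(ω_J + iω_K) = 0` and `N_J = 0`; (4) `∂̄_I(ω_J - iω_K) = 0` and `N_J = 0`. -/
theorem statement10 {n : ℕ} {C V : Type*} [CommRing C] [Algebra ℝ C] [AddCommGroup V]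
    [Module C V] [Module ℝ V] [IsScalarTower ℝ C V] (M : AQH n C V) :
    (M.IsHKT ↔
      (act3 M.J (M.d2 (M.omega M.J)) = act3 M.K (M.d2 (M.omega M.K)) ∧
       ∀ X Y, M.nijV M.J X Y = 0)) ∧
    (M.IsHKT ↔
      ((∀ X Y Z, M.partialC M.I (fun a b => (M.omega M.J a b, M.omega M.K a b)) X Y Z = 0) ∧
       ∀ X Y, M.nijV M.J X Y = 0)) ∧
    (M.IsHKT ↔
      ((∀ X Y Z, M.partialBarC M.I (fun a b => (M.omega M.J a b, -M.omega M.K a b)) X Y Z = 0) ∧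
       ∀ X Y, M.nijV M.J X Y = 0)) := by
  refine ⟨M.isHKT_iff, ?_, ?_⟩
  · rw [M.isHKT_iff, M.partialC_I_omega_eq_zero_iff]
  · rw [M.isHKT_iff, M.partialBarC_I_omega_eq_zero_iff]
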